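/- arXiv:quant-ph/0309121 — 9 statements merged into one kernel-verified Lean document; each statement's English description precedes it below -/
import Mathlib

section
/- Let G be a finite group and let D : G → U(n) be a unitary matrix representation of G (i.e., a group homomorphism into the group of n×n complex unitary matrices) such that the family of matrices {D(g) : g ∈ G} is linearly independent over ℂ. Suppose A is an n×n unitary matrix which is a linear combination A = Σ_{g ∈ G} α(g)·D(g) with coefficients α(g) ∈ ℂ. Then the associated group circulant circ_G(α), the G×G complex matrix with entry α(g⁻¹h) at position (g,h), is a unitary matrix. -/
/-- The group circulant of `α : G → ℂ`: the `G × G` matrix with entry `α (g⁻¹ * h)`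
at position `(g, h)`. -/
def groupCirculant {G : Type*} [Group G] (α : G → ℂ) : Matrix G G ℂ :=
  Matrix.of fun g h : G => α (g⁻¹ * h)

theorem stmt_0 {n : ℕ} {G : Type*} [Group G] [Fintype G] [DecidableEq G]
    (D : G →* Matrix.unitaryGroup (Fin n) ℂ)
    (hD : LinearIndependent ℂ fun g : G => (D g : Matrix (Fin n) (Fin n) ℂ))
    (A : Matrix (Fin n) (Fin n) ℂ) (hA : A ∈ Matrix.unitaryGroup (Fin n) ℂ)
    (α : G → ℂ)
    (hlin : A = ∑ g : G, α g • (D g : Matrix (Fin n) (Fin n) ℂ)) :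
    groupCirculant α ∈ Matrix.unitaryGroup G ℂ := by
  have hstar : ∀ b : G, star (D b : Matrix (Fin n) (Fin n) ℂ) = (D b⁻¹ : Matrix (Fin n) (Fin n) ℂ) := by
    intro b
    rw [map_inv]
    rfl
  have h1 : A * star A = 1 := Matrix.mem_unitaryGroup_iff.mp hA
  have h2 : A * star A = ∑ x : G, (∑ b : G, α (x * b) * star (α b)) •
      (D x : Matrix (Fin n) (Fin n) ℂ) := by
    rw [hlin, star_sum, Finset.mul_sum]
    simp_rw [Finset.sum_smul]
    rw [Finset.sum_comm]
    refine Finset.sum_congr rfl fun b _ => ?_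
    rw [Finset.sum_mul, ← Equiv.sum_comp (Equiv.mulRight b)]
    refine Finset.sum_congr rfl fun x _ => ?_
    have h3 : (D (x * b) : Matrix (Fin n) (Fin n) ℂ) * (D b⁻¹ : Matrix (Fin n) (Fin n) ℂ)
        = (D x : Matrix (Fin n) (Fin n) ℂ) := by
      rw [← Submonoid.coe_mul, ← map_mul, mul_inv_cancel_right]
    rw [star_smul, hstar, Equiv.coe_mulRight, smul_mul_smul_comm, h3]
  have h4 : ∑ x : G, ((∑ b : G, α (x * b) * star (α b)) - if x = 1 then 1 else 0) •
      (D x : Matrix (Fin n) (Fin n) ℂ) = 0 := by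
    simp_rw [sub_smul]
    rw [Finset.sum_sub_distrib, ← h2, h1]
    simp
  have h5 := Fintype.linearIndependent_iff.mp hD _ h4
  rw [Matrix.mem_unitaryGroup_iff]
  ext g h
  have h6 := sub_eq_zero.mp (h5 (g⁻¹ * h))
  rw [← Equiv.sum_comp (Equiv.mulLeft h⁻¹)] at h6
  simp only [Equiv.coe_mulLeft, mul_assoc, mul_inv_cancel_left, inv_mul_eq_one] at h6
  rw [Matrix.mul_apply, Matrix.one_apply]
  exact h6
end

section
/- Let G be a finite group and let D : G → U(n) be a unitary matrix representation of G such that the family {D(g) : g ∈ G} is linearly independent over ℂ. Suppose A is an n×n unitary matrix with A = Σ_{g ∈ G} α(g)·D(g) for coefficients α(g) ∈ ℂ. Then for every g ∈ G one has Σ_{h ∈ G} α(g·h)·conj(α(h)) = 1 if g is the identity element of G, and Σ_{h ∈ G} α(g·h)·conj(α(h)) = 0 otherwise. -/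
theorem stmt_1 {n : ℕ} {G : Type*} [Group G] [Fintype G] [DecidableEq G]
    (D : G →* Matrix.unitaryGroup (Fin n) ℂ)
    (hD : LinearIndependent ℂ fun g : G => (D g : Matrix (Fin n) (Fin n) ℂ))
    (A : Matrix (Fin n) (Fin n) ℂ) (hA : A ∈ Matrix.unitaryGroup (Fin n) ℂ)
    (α : G → ℂ)
    (hlin : A = ∑ g : G, α g • (D g : Matrix (Fin n) (Fin n) ℂ)) :
    ∀ g : G, (∑ h : G, α (g * h) * (starRingEnd ℂ) (α h)) =
      if g = 1 then 1 else 0 := by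
  have hinv : ∀ h : G, star (D h : Matrix (Fin n) (Fin n) ℂ) = (D h⁻¹ : Matrix (Fin n) (Fin n) ℂ) := by
    intro h
    rw [map_inv]
    rfl
  have hmul : ∀ g h : G, (D g : Matrix (Fin n) (Fin n) ℂ) * (D h : Matrix (Fin n) (Fin n) ℂ)
      = (D (g * h) : Matrix (Fin n) (Fin n) ℂ) := by
    intro g h
    rw [map_mul]
    rfl
  have h1 : A * star A = 1 := Matrix.mem_unitaryGroup_iff.mp hA
  have h2 : A * star A = ∑ g : G, (∑ h : G, α (g * h) * (starRingEnd ℂ) (α h)) •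
      (D g : Matrix (Fin n) (Fin n) ℂ) := by
    rw [hlin, star_sum, Finset.mul_sum]
    simp_rw [Finset.sum_smul]
    rw [Finset.sum_comm]
    refine Finset.sum_congr rfl fun h _ => ?_
    rw [Finset.sum_mul, ← Equiv.sum_comp (Equiv.mulRight h)]
    refine Finset.sum_congr rfl fun g _ => ?_
    rw [star_smul, hinv, smul_mul_smul_comm, hmul]
    simp
  have h3 : ∑ g : G, ((∑ h : G, α (g * h) * (starRingEnd ℂ) (α h)) - if g = 1 then 1 else 0) •
      (D g : Matrix (Fin n) (Fin n) ℂ) = 0 := by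
    simp_rw [sub_smul]
    rw [Finset.sum_sub_distrib, ← h2, h1]
    simp
  intro g
  exact sub_eq_zero.mp (Fintype.linearIndependent_iff.mp hD _ h3 g)
end

section
/- Let N be a positive integer, F_N the normalized discrete Fourier transform of size N, A_N the discrete Hartley transform of size N, H = (1/√2)·[[1,1],[1,−1]] the 2×2 Hadamard matrix, and R = (1/2)·[[1−i, 1+i],[1+i, 1−i]]. Let Λ denote the 2N×2N block-diagonal matrix with blocks I_N and F_N² (i.e., Λ = I_N ⊕ F_N², the controlled-F_N² operation). Then the matrix M = (H ⊗ I_N)·Λ·(R ⊗ I_N)·Λ·(I₂ ⊗ F_N)·(H ⊗ I_N) satisfies M·(e₀ ⊗ x) = e₀ ⊗ (A_N·x) for every vector x ∈ ℂ^N, where e₀ = (1,0)ᵀ ∈ ℂ² and ⊗ denotes the Kronecker (tensor) product. -/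
open Kronecker

/-- The normalized discrete Fourier transform of size `N`. -/
noncomputable def dft (N : ℕ) : Matrix (Fin N) (Fin N) ℂ :=
  Matrix.of fun k l : Fin N =>
    ((1 / Real.sqrt N : ℝ) : ℂ) *
      Complex.exp (2 * Real.pi * Complex.I * ((k.1 * l.1 : ℕ) : ℂ) / N)

/-- The discrete Hartley transform of size `N`. -/
noncomputable def hartley (N : ℕ) : Matrix (Fin N) (Fin N) ℂ :=
  Matrix.of fun k l : Fin N =>
    (((1 / Real.sqrt N) * (Real.cos (2 * Real.pi * (k.1 * l.1 : ℕ) / N) +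
        Real.sin (2 * Real.pi * (k.1 * l.1 : ℕ) / N)) : ℝ) : ℂ)

/-- The 2×2 Hadamard matrix `H = (1/√2)·[[1,1],[1,−1]]`. -/
noncomputable def Had : Matrix (Fin 2) (Fin 2) ℂ :=
  (((Real.sqrt 2)⁻¹ : ℝ) : ℂ) • !![1, 1; 1, -1]

/-- The circulant `R = (1/2)·[[1−i, 1+i],[1+i, 1−i]]`. -/
noncomputable def Rmat : Matrix (Fin 2) (Fin 2) ℂ :=
  (1 / 2 : ℂ) • !![1 - Complex.I, 1 + Complex.I; 1 + Complex.I, 1 - Complex.I]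

/-- The block-diagonal matrix `Λ = I_N ⊕ F_N²` (controlled-`F_N²`). -/
noncomputable def Lam (N : ℕ) : Matrix (Fin 2 × Fin N) (Fin 2 × Fin N) ℂ :=
  Matrix.of fun p q =>
    if p.1 = q.1 then
      (if p.1 = 0 then (1 : Matrix (Fin N) (Fin N) ℂ) else dft N ^ 2) p.2 q.2
    else 0


noncomputable def zt (N : ℕ) : ℂ := Complex.exp (2 * Real.pi * Complex.I / N)

noncomputable def cdft (N : ℕ) : Matrix (Fin N) (Fin N) ℂ :=
  Matrix.of fun k l : Fin N => ((1 / Real.sqrt N : ℝ) : ℂ) * ((zt N)⁻¹) ^ (k.1 * l.1)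

lemma dft_apply (N : ℕ) (k l : Fin N) :
    dft N k l = ((1 / Real.sqrt N : ℝ) : ℂ) * (zt N) ^ (k.1 * l.1) := by
  simp only [dft, Matrix.of_apply, zt]
  rw [← Complex.exp_nat_mul]
  congr 2
  ring

lemma zt_prim (N : ℕ) (hN : 0 < N) : IsPrimitiveRoot (zt N) N :=
  Complex.isPrimitiveRoot_exp N hN.ne'

lemma dft_mul_cdft (N : ℕ) (hN : 0 < N) : dft N * cdft N = 1 := by
  have hz := zt_prim N hN
  have hz0 : zt N ≠ 0 := Complex.exp_ne_zero _
  have hc : ((1 / Real.sqrt N : ℝ) : ℂ) * ((1 / Real.sqrt N : ℝ) : ℂ) * N = 1 := by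
    have h : (1 / Real.sqrt N) * (1 / Real.sqrt N) * (N : ℝ) = 1 := by
      have h0 : (0 : ℝ) < N := by exact_mod_cast hN
      rw [div_mul_div_comm, Real.mul_self_sqrt h0.le]
      field_simp
    exact_mod_cast h
  ext k l
  rw [Matrix.mul_apply]
  have hterm : ∀ j : Fin N, dft N k j * cdft N j l =
      (((1 / Real.sqrt N : ℝ) : ℂ) * ((1 / Real.sqrt N : ℝ) : ℂ)) *
        ((zt N) ^ k.1 * ((zt N)⁻¹) ^ l.1) ^ j.1 := by
    intro j
    rw [dft_apply]
    simp only [cdft, Matrix.of_apply]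
    rw [mul_pow, ← pow_mul, ← pow_mul, mul_comm j.1 l.1]
    ring
  rw [Finset.sum_congr rfl (fun j _ => hterm j), ← Finset.mul_sum,
    Fin.sum_univ_eq_sum_range (fun j => ((zt N) ^ k.1 * ((zt N)⁻¹) ^ l.1) ^ j)]
  by_cases hkl : k = l
  · subst hkl
    have h1 : (zt N) ^ k.1 * ((zt N)⁻¹) ^ k.1 = 1 := by
      rw [← mul_pow, mul_inv_cancel₀ hz0, one_pow]
    rw [h1]
    simpa using hc
  · have hw : (zt N) ^ k.1 * ((zt N)⁻¹) ^ l.1 ≠ 1 := by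
      intro h
      apply hkl
      rw [inv_pow, mul_inv_eq_one₀ (pow_ne_zero _ hz0)] at h
      exact Fin.ext (hz.pow_inj k.2 l.2 h)
    rw [geom_sum_eq hw, Matrix.one_apply_ne hkl]
    have : ((zt N) ^ k.1 * ((zt N)⁻¹) ^ l.1) ^ N = 1 := by
      rw [mul_pow, ← pow_mul, ← pow_mul, mul_comm k.1, mul_comm l.1, pow_mul, pow_mul, inv_pow,
        hz.pow_eq_one]
      simp
    rw [this]
    simp

lemma cdft_eq (N : ℕ) [NeZero N] :
    cdft N = (dft N).submatrix id (Equiv.neg (Fin N)) := by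
  have hz := zt_prim N (NeZero.pos N)
  have hz0 : zt N ≠ 0 := Complex.exp_ne_zero _
  ext k l
  simp only [Matrix.submatrix_apply, dft_apply, cdft, Matrix.of_apply, id, Equiv.neg_apply]
  congr 1
  rw [inv_pow, inv_eq_iff_eq_inv, ← mul_eq_one_iff_eq_inv₀ (pow_ne_zero _ hz0), ← pow_add,
    ← mul_add, hz.pow_eq_one_iff_dvd]
  apply Dvd.dvd.mul_left
  have h : l + -l = 0 := add_neg_cancel l
  have := congrArg Fin.val h
  rw [Fin.val_add] at this
  exact Nat.dvd_of_mod_eq_zero this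

lemma dft_sq_mul (N : ℕ) (hN : 0 < N) : dft N ^ 2 * dft N = cdft N := by
  have : NeZero N := ⟨hN.ne'⟩
  have h1 := dft_mul_cdft N hN
  have hP : dft N * dft N = (1 : Matrix (Fin N) (Fin N) ℂ).submatrix id (Equiv.neg (Fin N)) := by
    rw [← h1, cdft_eq]
    ext i j
    simp [Matrix.mul_apply]
  rw [pow_two, mul_assoc, hP, cdft_eq]
  ext i j
  simp [Matrix.mul_apply, Matrix.one_apply]

lemma dft_sq_mul_cdft (N : ℕ) (hN : 0 < N) : dft N ^ 2 * cdft N = dft N := by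
  rw [pow_two, mul_assoc, dft_mul_cdft N hN, mul_one]

lemma hartley_eq (N : ℕ) :
    hartley N = ((1 - Complex.I) / 2) • dft N + ((1 + Complex.I) / 2) • cdft N := by
  ext k l
  simp only [Matrix.add_apply, Matrix.smul_apply, smul_eq_mul, dft_apply, cdft, hartley,
    Matrix.of_apply]
  set t : ℝ := 2 * Real.pi * (k.1 * l.1 : ℕ) / N with ht
  have e1 : (zt N) ^ (k.1 * l.1) = Complex.cos t + Complex.sin t * Complex.I := by
    rw [← Complex.exp_mul_I, zt, ← Complex.exp_nat_mul]
    congr 1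
    rw [ht]; push_cast; ring
  have e2 : (zt N)⁻¹ ^ (k.1 * l.1) = Complex.cos t - Complex.sin t * Complex.I := by
    have : Complex.cos t - Complex.sin t * Complex.I
        = Complex.cos (-t) + Complex.sin (-t) * Complex.I := by
      rw [Complex.cos_neg, Complex.sin_neg]; ring
    rw [this, ← Complex.exp_mul_I, zt, ← Complex.exp_neg, ← Complex.exp_nat_mul]
    congr 1
    rw [ht]; push_cast; ring
  rw [e1, e2]
  push_cast
  linear_combination (1 / (Real.sqrt N : ℂ)) * Complex.sin t * Complex.I_sq

/-- stacked vector -/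
def stk {N : ℕ} (u v : Fin N → ℂ) : Fin 2 × Fin N → ℂ :=
  fun p => if p.1 = 0 then u p.2 else v p.2

lemma kron_stk {N : ℕ} (A : Matrix (Fin 2) (Fin 2) ℂ) (B : Matrix (Fin N) (Fin N) ℂ)
    (u v : Fin N → ℂ) :
    (A ⊗ₖ B).mulVec (stk u v) =
      stk (A 0 0 • B.mulVec u + A 0 1 • B.mulVec v) (A 1 0 • B.mulVec u + A 1 1 • B.mulVec v) := by
  ext ⟨a, i⟩
  fin_cases a <;>
  simp [stk, Matrix.mulVec, dotProduct, Fintype.sum_prod_type, Finset.mul_sum, mul_assoc]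

lemma Lam_stk {N : ℕ} (u v : Fin N → ℂ) :
    (Lam N).mulVec (stk u v) = stk u ((dft N ^ 2).mulVec v) := by
  ext ⟨a, i⟩
  fin_cases a <;>
  simp [stk, Lam, Matrix.mulVec, dotProduct, Fintype.sum_prod_type, Matrix.one_apply]

theorem stmt_3 (N : ℕ) (hN : 0 < N) (x : Fin N → ℂ) :
    ((Had ⊗ₖ (1 : Matrix (Fin N) (Fin N) ℂ)) * Lam N *
        (Rmat ⊗ₖ (1 : Matrix (Fin N) (Fin N) ℂ)) * Lam N *
        ((1 : Matrix (Fin 2) (Fin 2) ℂ) ⊗ₖ dft N) *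
        (Had ⊗ₖ (1 : Matrix (Fin N) (Fin N) ℂ))).mulVec
      (fun p : Fin 2 × Fin N => if p.1 = 0 then x p.2 else 0) =
    fun p : Fin 2 × Fin N => if p.1 = 0 then (hartley N).mulVec x p.2 else 0 := by
  have hs : (((Real.sqrt 2)⁻¹ : ℝ) : ℂ) * (((Real.sqrt 2)⁻¹ : ℝ) : ℂ) = 1 / 2 := by
    have : (Real.sqrt 2)⁻¹ * (Real.sqrt 2)⁻¹ = (1 / 2 : ℝ) := by
      rw [← mul_inv, Real.mul_self_sqrt (by norm_num)]; norm_num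
    rw [← Complex.ofReal_mul, this]; norm_num
  change Matrix.mulVec _ (stk x 0) = stk ((hartley N).mulVec x) 0
  simp only [← Matrix.mulVec_mulVec, kron_stk, Lam_stk]
  rw [hartley_eq]
  generalize hr : (((Real.sqrt 2)⁻¹ : ℝ) : ℂ) = r at hs
  simp only [Had, hr, Rmat, Matrix.smul_apply, Matrix.of_apply, Matrix.cons_val', Matrix.cons_val_zero,
    Matrix.cons_val_one, Matrix.cons_val_fin_one, smul_eq_mul, Matrix.one_mulVec,
    Matrix.mulVec_zero, smul_zero, add_zero, Matrix.mulVec_smul, Matrix.mulVec_add,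
    Matrix.mulVec_mulVec, dft_sq_mul N hN, dft_sq_mul_cdft N hN, Matrix.add_mulVec,
    Matrix.smul_mulVec, Matrix.one_apply, mul_one]
  ext ⟨a, i⟩
  fin_cases a
  · simp [stk, dft_sq_mul N hN, dft_sq_mul_cdft N hN]
    linear_combination ((1 - Complex.I) * (dft N).mulVec x i + (1 + Complex.I) * (cdft N).mulVec x i) * hs
  · simp [stk, dft_sq_mul N hN, dft_sq_mul_cdft N hN]
end

section
/- Let G be a finite group, D : G → U(m) a unitary matrix representation of G, α : G → ℂ, and set A = Σ_{g ∈ G} α(g)·D(g). Let 𝒟 denote the (G-indexed) block-diagonal matrix diag(D(g) : g ∈ G) acting on ℂ^G ⊗ ℂ^m, let C = circ_G(α) ⊗ I_m, and let u = (1/√|G|)·Σ_{g ∈ G} e_g ∈ ℂ^G be the normalized uniform superposition vector. Then 𝒟†·C·𝒟·(u ⊗ x) = u ⊗ (A·x) for every x ∈ ℂ^m. -/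
open Matrix Kronecker

/-- The `G`-indexed block-diagonal matrix `diag(D(g) : g ∈ G)` acting on `ℂ^G ⊗ ℂ^m`. -/
def blockDiag {G : Type*} [Group G] [Fintype G] [DecidableEq G] {m : ℕ}
    (D : G →* Matrix.unitaryGroup (Fin m) ℂ) : Matrix (G × Fin m) (G × Fin m) ℂ :=
  Matrix.of fun p q =>
    if p.1 = q.1 then (D p.1 : Matrix (Fin m) (Fin m) ℂ) p.2 q.2 else 0

theorem bd_mulVec {m : ℕ} {G : Type*} [Group G] [Fintype G] [DecidableEq G]
    (D : G →* Matrix.unitaryGroup (Fin m) ℂ) (v : G × Fin m → ℂ) (p : G × Fin m) :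
    (_root_.blockDiag D).mulVec v p =
      ((D p.1 : Matrix (Fin m) (Fin m) ℂ).mulVec fun j => v (p.1, j)) p.2 := by
  simp only [Matrix.mulVec, dotProduct, _root_.blockDiag, Matrix.of_apply, Fintype.sum_prod_type]
  rw [Finset.sum_eq_single p.1]
  · simp
  · intro b _ hb
    simp [Ne.symm hb]
  · simp

theorem bd_conj {m : ℕ} {G : Type*} [Group G] [Fintype G] [DecidableEq G]
    (D : G →* Matrix.unitaryGroup (Fin m) ℂ) (v : G × Fin m → ℂ) (p : G × Fin m) :
    (_root_.blockDiag D)ᴴ.mulVec v p =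
      ((D p.1⁻¹ : Matrix (Fin m) (Fin m) ℂ).mulVec fun j => v (p.1, j)) p.2 := by
  have hD : (D p.1⁻¹ : Matrix (Fin m) (Fin m) ℂ) = (D p.1 : Matrix (Fin m) (Fin m) ℂ)ᴴ := by
    rw [map_inv]; rfl
  rw [hD]
  simp only [Matrix.mulVec, dotProduct, _root_.blockDiag, Matrix.of_apply, Fintype.sum_prod_type,
    Matrix.conjTranspose_apply]
  rw [Finset.sum_eq_single p.1]
  · simp
  · intro b _ hb
    simp [hb]
  · simp

theorem circ_mulVec {m : ℕ} {G : Type*} [Group G] [Fintype G] [DecidableEq G]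
    (α : G → ℂ) (v : G × Fin m → ℂ) (p : G × Fin m) :
    (groupCirculant α ⊗ₖ (1 : Matrix (Fin m) (Fin m) ℂ)).mulVec v p =
      ∑ h, α (p.1⁻¹ * h) * v (h, p.2) := by
  simp [Matrix.mulVec, dotProduct, groupCirculant, Fintype.sum_prod_type, Matrix.one_apply]

theorem stmt_5 {m : ℕ} {G : Type*} [Group G] [Fintype G] [DecidableEq G]
    (D : G →* Matrix.unitaryGroup (Fin m) ℂ) (α : G → ℂ)
    (A : Matrix (Fin m) (Fin m) ℂ)
    (hA : A = ∑ g : G, α g • (D g : Matrix (Fin m) (Fin m) ℂ))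
    (x : Fin m → ℂ) :
    ((blockDiag D)ᴴ * (groupCirculant α ⊗ₖ (1 : Matrix (Fin m) (Fin m) ℂ)) *
        blockDiag D).mulVec
      (fun p : G × Fin m => (((Real.sqrt (Fintype.card G))⁻¹ : ℝ) : ℂ) * x p.2) =
    fun p : G × Fin m =>
      (((Real.sqrt (Fintype.card G))⁻¹ : ℝ) : ℂ) * A.mulVec x p.2 := by
  funext p
  obtain ⟨g, i⟩ := p
  rw [← Matrix.mulVec_mulVec, ← Matrix.mulVec_mulVec, bd_conj]
  simp only [circ_mulVec, bd_mulVec]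
  generalize (((Real.sqrt (Fintype.card G))⁻¹ : ℝ) : ℂ) = c
  have e1 : (fun j : Fin m => ∑ h, α (g⁻¹ * h) *
      ((D h : Matrix (Fin m) (Fin m) ℂ).mulVec fun j => c * x j) j) =
      ∑ h, (α (g⁻¹ * h) * c) • (D h : Matrix (Fin m) (Fin m) ℂ).mulVec x := by
    have e0 : (fun j => c * x j) = c • x := rfl
    funext j
    simp [e0, Matrix.mulVec_smul, Finset.sum_apply, mul_assoc]
  rw [e1, Matrix.mulVec_sum]
  simp only [Matrix.mulVec_smul, Matrix.mulVec_mulVec]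
  have e2 : ∀ h, (D g⁻¹ : Matrix (Fin m) (Fin m) ℂ) * (D h : Matrix (Fin m) (Fin m) ℂ) =
      (D (g⁻¹ * h) : Matrix (Fin m) (Fin m) ℂ) := by
    intro h
    rw [map_mul]; rfl
  simp only [e2]
  have e3 : ∑ h, (α (g⁻¹ * h) * c) • (D (g⁻¹ * h) : Matrix (Fin m) (Fin m) ℂ).mulVec x =
      ∑ k, (α k * c) • (D k : Matrix (Fin m) (Fin m) ℂ).mulVec x :=
    Equiv.sum_comp (Equiv.mulLeft g⁻¹)
      (fun k => (α k * c) • (D k : Matrix (Fin m) (Fin m) ℂ).mulVec x)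
  rw [e3]
  rw [hA, Matrix.sum_mulVec]
  simp only [Finset.sum_apply, Pi.smul_apply, smul_eq_mul, Matrix.smul_mulVec, Finset.mul_sum]
  exact Finset.sum_congr rfl fun k _ => by ring
end

section
/- Let G be a finite group with identity element e, D : G → U(m) a unitary matrix representation of G, α : G → ℂ, and A = Σ_{g ∈ G} α(g)·D(g). Let 𝒟 = diag(D(g) : g ∈ G) be the block-diagonal matrix on ℂ^{G×{1,…,m}}, let C = circ_G(α) ⊗ I_m, and let W be any unitary G×G matrix all of whose entries in the column indexed by e are equal to 1/√|G|. Set M = (W ⊗ I_m)†·𝒟†·C·𝒟·(W ⊗ I_m). Then for all i,j ∈ {1,…,m}: M_{(e,i),(e,j)} = A_{i,j}, and for every g ∈ G with g ≠ e: M_{(e,i),(g,j)} = 0 and M_{(g,i),(e,j)} = 0. In other words, M has the block form A ⊕ U with A in the block indexed by (e,e). -/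
open Matrix Kronecker

/-- The full matrix `M = (W ⊗ I_m)† · 𝒟† · C · 𝒟 · (W ⊗ I_m)` of the generic circuit. -/
noncomputable def circuitMatrix {G : Type*} [Group G] [Fintype G] [DecidableEq G] {m : ℕ}
    (D : G →* Matrix.unitaryGroup (Fin m) ℂ) (α : G → ℂ) (W : Matrix G G ℂ) :
    Matrix (G × Fin m) (G × Fin m) ℂ :=
  (W ⊗ₖ (1 : Matrix (Fin m) (Fin m) ℂ))ᴴ * (blockDiag D)ᴴ *
    (groupCirculant α ⊗ₖ (1 : Matrix (Fin m) (Fin m) ℂ)) * blockDiag D *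
    (W ⊗ₖ (1 : Matrix (Fin m) (Fin m) ℂ))

lemma core_apply {m : ℕ} {G : Type*} [Group G] [Fintype G] [DecidableEq G]
    (D : G →* Matrix.unitaryGroup (Fin m) ℂ) (α : G → ℂ) (g h : G) (k l : Fin m) :
    ((blockDiag D)ᴴ * (groupCirculant α ⊗ₖ (1 : Matrix (Fin m) (Fin m) ℂ)) * blockDiag D)
      (g, k) (h, l) = α (g⁻¹ * h) * (D (g⁻¹ * h) : Matrix (Fin m) (Fin m) ℂ) k l := by
  have hD : (D (g⁻¹ * h) : Matrix (Fin m) (Fin m) ℂ)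
      = (D g : Matrix (Fin m) (Fin m) ℂ)ᴴ * (D h : Matrix (Fin m) (Fin m) ℂ) := by
    rw [map_mul, map_inv]; rfl
  have h1 : ∀ (x : G) (y : Fin m),
      ((blockDiag D)ᴴ * (groupCirculant α ⊗ₖ (1 : Matrix (Fin m) (Fin m) ℂ))) (g, k) (x, y)
      = star ((D g : Matrix (Fin m) (Fin m) ℂ) y k) * α (g⁻¹ * x) := by
    intro x y
    rw [Matrix.mul_apply, Fintype.sum_prod_type, Finset.sum_eq_single g, Finset.sum_eq_single y]
    · simp [_root_.blockDiag, groupCirculant]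
    · intro b _ hb
      simp [hb]
    · simp
    · intro b _ hb
      simp [_root_.blockDiag, hb]
    · simp
  rw [hD, Matrix.mul_apply, Fintype.sum_prod_type, Finset.sum_eq_single h]
  · rw [Matrix.mul_apply, Finset.mul_sum]
    refine Finset.sum_congr rfl fun y _ => ?_
    rw [h1]
    simp only [_root_.blockDiag, Matrix.of_apply, if_true, Matrix.conjTranspose_apply]
    ring
  · intro b _ hb
    simp [_root_.blockDiag, hb]
  · simp

lemma circuit_apply {m : ℕ} {G : Type*} [Group G] [Fintype G] [DecidableEq G]
    (D : G →* Matrix.unitaryGroup (Fin m) ℂ) (α : G → ℂ) (W : Matrix G G ℂ)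
    (a b : G) (i j : Fin m) :
    circuitMatrix D α W (a, i) (b, j) = ∑ h, ∑ g, star (W g a) *
      (α (g⁻¹ * h) * (D (g⁻¹ * h) : Matrix (Fin m) (Fin m) ℂ) i j) * W h b := by
  have e : circuitMatrix D α W = (W ⊗ₖ (1 : Matrix (Fin m) (Fin m) ℂ))ᴴ *
      ((blockDiag D)ᴴ * (groupCirculant α ⊗ₖ (1 : Matrix (Fin m) (Fin m) ℂ)) * blockDiag D) *
      (W ⊗ₖ (1 : Matrix (Fin m) (Fin m) ℂ)) := by
    simp only [circuitMatrix, Matrix.mul_assoc]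
  rw [e, Matrix.mul_apply, Fintype.sum_prod_type]
  refine Finset.sum_congr rfl fun h _ => ?_
  rw [Finset.sum_eq_single j, Matrix.mul_apply, Fintype.sum_prod_type, Finset.sum_mul]
  · refine Finset.sum_congr rfl fun g _ => ?_
    rw [Finset.sum_eq_single i, core_apply]
    · simp
    · intro y _ hy
      simp [hy]
    · simp
  · intro y _ hy
    simp [hy]
  · simp

theorem stmt_7 {m : ℕ} {G : Type*} [Group G] [Fintype G] [DecidableEq G]
    (D : G →* Matrix.unitaryGroup (Fin m) ℂ) (α : G → ℂ)
    (A : Matrix (Fin m) (Fin m) ℂ)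
    (hA : A = ∑ g : G, α g • (D g : Matrix (Fin m) (Fin m) ℂ))
    (W : Matrix G G ℂ) (hW : W ∈ Matrix.unitaryGroup G ℂ)
    (hWcol : ∀ g : G, W g 1 = (((Real.sqrt (Fintype.card G))⁻¹ : ℝ) : ℂ)) :
    (∀ i j : Fin m, circuitMatrix D α W (1, i) (1, j) = A i j) ∧
    (∀ g : G, g ≠ 1 → ∀ i j : Fin m,
      circuitMatrix D α W (1, i) (g, j) = 0 ∧ circuitMatrix D α W (g, i) (1, j) = 0) := by
  have hWW : ∀ a b : G, ∑ g, star (W g a) * W g b = (1 : Matrix G G ℂ) a b := by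
    intro a b
    rw [← (Matrix.mem_unitaryGroup_iff'.mp hW), Matrix.mul_apply]
    rfl
  have hAij : ∀ i j, A i j = ∑ g, α g * (D g : Matrix (Fin m) (Fin m) ℂ) i j := by
    intro i j
    rw [hA, Matrix.sum_apply]
    rfl
  have hcol : ∀ g h : G, W g 1 = W h 1 := fun g h => by rw [hWcol, hWcol]
  have right : ∀ (a : G) (i j : Fin m),
      circuitMatrix D α W (a, i) (1, j) = (1 : Matrix G G ℂ) a 1 * A i j := by
    intro a i j
    rw [circuit_apply, Finset.sum_comm, ← hWW, Finset.sum_mul]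
    refine Finset.sum_congr rfl fun g _ => ?_
    rw [hAij, Finset.mul_sum, ← Equiv.sum_comp (Equiv.mulLeft g)]
    refine Finset.sum_congr rfl fun h _ => ?_
    rw [Equiv.coe_mulLeft, hcol (g * h) g, inv_mul_cancel_left]
    ring
  have left : ∀ (b : G) (i j : Fin m),
      circuitMatrix D α W (1, i) (b, j) = (1 : Matrix G G ℂ) 1 b * A i j := by
    intro b i j
    rw [circuit_apply, ← hWW, Finset.sum_mul]
    refine Finset.sum_congr rfl fun h _ => ?_
    rw [hAij, Finset.mul_sum,
      ← Equiv.sum_comp ((Equiv.inv G).trans (Equiv.mulLeft h))]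
    refine Finset.sum_congr rfl fun g _ => ?_
    simp only [Equiv.trans_apply, Equiv.inv_apply, Equiv.coe_mulLeft]
    have e : (h * g⁻¹)⁻¹ * h = g := by group
    rw [e, hcol (h * g⁻¹) h]
    ring
  refine ⟨fun i j => by simp [right], fun g hg i j => ⟨?_, ?_⟩⟩
  · rw [left, Matrix.one_apply_ne hg.symm, zero_mul]
  · rw [right, Matrix.one_apply_ne hg, zero_mul]
end

section
/- Let G be a finite group and D : G → U(n) a unitary matrix representation of G (the matrices D(g) are not assumed linearly independent). If a unitary n×n matrix A lies in the ℂ-linear span of {D(g) : g ∈ G}, then there exists a choice of coefficients α : G → ℂ such that A = Σ_{g ∈ G} α(g)·D(g) and the associated group circulant circ_G(α) is unitary. -/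
open Matrix in
/-- The adjoint of the synthesis map. -/
noncomputable def auxT {n : ℕ} {G : Type*} [Group G]
    (D : G →* Matrix.unitaryGroup (Fin n) ℂ) :
    Matrix (Fin n) (Fin n) ℂ →ₗ[ℂ] (G → ℂ) where
  toFun B := fun g => Matrix.trace ((D g : Matrix (Fin n) (Fin n) ℂ)ᴴ * B)
  map_add' B C := by ext g; simp [Matrix.mul_add]
  map_smul' c B := by ext g; simp

/-- The synthesis map. -/
noncomputable def auxL {n : ℕ} {G : Type*} [Group G] [Fintype G]
    (D : G →* Matrix.unitaryGroup (Fin n) ℂ) :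
    (G → ℂ) →ₗ[ℂ] Matrix (Fin n) (Fin n) ℂ where
  toFun a := ∑ g : G, a g • (D g : Matrix (Fin n) (Fin n) ℂ)
  map_add' a b := by simp [add_smul, Finset.sum_add_distrib]
  map_smul' c a := by simp [Finset.smul_sum, mul_smul]

section aux
open Matrix
open scoped ComplexOrder
variable {n : ℕ} {G : Type*} [Group G] [Fintype G]
    (D : G →* Matrix.unitaryGroup (Fin n) ℂ)

theorem auxT_apply (B : Matrix (Fin n) (Fin n) ℂ) (g : G) :
    auxT D B g = Matrix.trace ((D g : Matrix (Fin n) (Fin n) ℂ)ᴴ * B) := rfl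

theorem auxL_apply (a : G → ℂ) :
    auxL D a = ∑ g : G, a g • (D g : Matrix (Fin n) (Fin n) ℂ) := rfl

theorem aux_inv (g : G) : (D g⁻¹ : Matrix (Fin n) (Fin n) ℂ) =
    (D g : Matrix (Fin n) (Fin n) ℂ)ᴴ := by
  rw [map_inv]; rfl

theorem aux_mul (g h : G) : (D (g * h) : Matrix (Fin n) (Fin n) ℂ) =
    (D g : Matrix (Fin n) (Fin n) ℂ) * (D h : Matrix (Fin n) (Fin n) ℂ) := by
  rw [map_mul]; rfl

theorem auxT_star (B : Matrix (Fin n) (Fin n) ℂ) (g : G) :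
    auxT D Bᴴ g = star (auxT D B g⁻¹) := by
  rw [auxT_apply, auxT_apply, aux_inv, ← Matrix.trace_conjTranspose,
    Matrix.conjTranspose_mul, Matrix.conjTranspose_conjTranspose, Matrix.trace_mul_comm]

theorem auxT_left (B : Matrix (Fin n) (Fin n) ℂ) (y g : G) :
    auxT D ((D y : Matrix (Fin n) (Fin n) ℂ)ᴴ * B) g = auxT D B (y * g) := by
  rw [auxT_apply, auxT_apply, aux_mul, Matrix.conjTranspose_mul, Matrix.mul_assoc]

theorem auxL_star (B : Matrix (Fin n) (Fin n) ℂ) :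
    auxL D (auxT D Bᴴ) = (auxL D (auxT D B))ᴴ := by
  rw [auxL_apply, auxL_apply, Matrix.conjTranspose_sum,
    ← Equiv.sum_comp (Equiv.inv G)]
  refine Finset.sum_congr rfl fun g _ => ?_
  rw [Equiv.inv_apply, auxT_star, aux_inv, inv_inv, Matrix.conjTranspose_smul]

theorem auxL_left (B : Matrix (Fin n) (Fin n) ℂ) (y : G) :
    auxL D (auxT D ((D y : Matrix (Fin n) (Fin n) ℂ)ᴴ * B)) =
      (D y : Matrix (Fin n) (Fin n) ℂ)ᴴ * auxL D (auxT D B) := by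
  rw [auxL_apply, auxL_apply, Finset.mul_sum,
    ← Equiv.sum_comp (Equiv.mulLeft y⁻¹)]
  refine Finset.sum_congr rfl fun g _ => ?_
  rw [Equiv.coe_mulLeft, auxT_left, mul_inv_cancel_left, aux_mul, aux_inv, Matrix.mul_smul]

theorem auxT_eq_zero (C : Matrix (Fin n) (Fin n) ℂ) (h : auxL D (auxT D C) = 0) :
    auxT D C = 0 := by
  have h1 : ∑ g : G, auxT D C g * star (auxT D C g) = 0 := by
    have h2 := congrArg (fun X => Matrix.trace (Cᴴ * X)) h
    simp only [auxL_apply, Finset.mul_sum, Matrix.trace_sum, Matrix.mul_smul,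
      Matrix.trace_smul, Matrix.mul_zero, Matrix.trace_zero, smul_eq_mul] at h2
    rw [← h2]
    refine Finset.sum_congr rfl fun g _ => ?_
    congr 1
    rw [auxT_apply, ← Matrix.trace_conjTranspose, Matrix.conjTranspose_mul,
      Matrix.conjTranspose_conjTranspose]
  have h3 : auxT D C ⬝ᵥ star (auxT D C) = 0 := h1
  exact dotProduct_self_star_eq_zero.mp h3

theorem aux_range (a : G → ℂ) : ∃ B, auxL D (auxT D B) = auxL D a := by
  let M : Matrix (Fin n × Fin n) G ℂ :=
    Matrix.of fun p g => (D g : Matrix (Fin n) (Fin n) ℂ) p.1 p.2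
  have hle : LinearMap.range (M * Mᴴ).mulVecLin ≤ LinearMap.range M.mulVecLin := by
    rw [Matrix.mulVecLin_mul]
    exact LinearMap.range_comp_le_range _ _
  have heq := Submodule.eq_of_le_of_finrank_eq hle (Matrix.rank_self_mul_conjTranspose M)
  have hm : M.mulVecLin a ∈ LinearMap.range (M * Mᴴ).mulVecLin := by
    rw [heq]; exact ⟨a, rfl⟩
  obtain ⟨b, hb⟩ := hm
  have hT : auxT D (Matrix.of fun i j => b (i, j)) = Mᴴ *ᵥ b := by
    ext g
    simp only [auxT_apply, Matrix.trace, Matrix.diag_apply, Matrix.mul_apply, Matrix.mulVec,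
      dotProduct, Fintype.sum_prod_type, Matrix.conjTranspose_apply, M, Matrix.of_apply]
    exact Finset.sum_comm
  have hL : ∀ (c : G → ℂ) i j, auxL D c i j = (M *ᵥ c) (i, j) := by
    intro c i j
    simp only [auxL_apply, Matrix.sum_apply, Matrix.smul_apply, Matrix.mulVec, dotProduct, M,
      Matrix.of_apply, smul_eq_mul]
    exact Finset.sum_congr rfl fun g _ => mul_comm _ _
  refine ⟨Matrix.of fun i j => b (i, j), ?_⟩
  ext i j
  rw [hL, hL, hT, Matrix.mulVec_mulVec]
  exact congrFun hb (i, j)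

end aux

open Matrix in
theorem stmt_8 {n : ℕ} {G : Type*} [Group G] [Fintype G] [DecidableEq G]
    (D : G →* Matrix.unitaryGroup (Fin n) ℂ)
    (A : Matrix (Fin n) (Fin n) ℂ) (hA : A ∈ Matrix.unitaryGroup (Fin n) ℂ)
    (hspan : A ∈ Submodule.span ℂ
      (Set.range fun g : G => (D g : Matrix (Fin n) (Fin n) ℂ))) :
    ∃ α : G → ℂ,
      A = ∑ g : G, α g • (D g : Matrix (Fin n) (Fin n) ℂ) ∧
      groupCirculant α ∈ Matrix.unitaryGroup G ℂ := by
  obtain ⟨a, ha⟩ := (Submodule.mem_span_range_iff_exists_fun ℂ).mp hspan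
  have hδ : auxL D (Pi.single 1 1) = 1 := by
    rw [auxL_apply, Finset.sum_eq_single 1]
    · simp
    · intro b _ hb; simp [hb]
    · simp
  obtain ⟨B, hB⟩ := aux_range D (a - Pi.single 1 1)
  have hB' : auxL D (auxT D B) = A - 1 := by
    rw [hB, map_sub, hδ, auxL_apply, ha]
  set u := auxT D B with hu
  have hX : (A - 1)ᴴ = ∑ y, star (u y) • (D y : Matrix (Fin n) (Fin n) ℂ)ᴴ := by
    rw [← hB', auxL_apply, Matrix.conjTranspose_sum]
    simp only [Matrix.conjTranspose_smul]
  have hAA : Aᴴ * A = 1 := Matrix.mem_unitaryGroup_iff'.mp hA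
  have hw : auxT D (B + Bᴴ + ∑ y, star (u y) • ((D y : Matrix (Fin n) (Fin n) ℂ)ᴴ * B)) = 0 := by
    apply auxT_eq_zero
    simp only [map_add, map_sum, map_smul, auxL_left, auxL_star]
    rw [← hu, hB']
    have : ∑ y, star (u y) • ((D y : Matrix (Fin n) (Fin n) ℂ)ᴴ * (A - 1)) =
        (A - 1)ᴴ * (A - 1) := by
      rw [hX, Finset.sum_mul]
      simp only [Matrix.smul_mul]
    rw [this, Matrix.conjTranspose_sub, Matrix.conjTranspose_one]
    have : A - 1 + (Aᴴ - 1) + (Aᴴ - 1) * (A - 1) = Aᴴ * A - 1 := by noncomm_ring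
    rw [this, hAA, sub_self]
  have hw' : ∀ x, u x + star (u x⁻¹) + ∑ y, star (u y) * u (y * x) = 0 := by
    intro x
    have := congrFun hw x
    simpa only [map_add, map_sum, map_smul, Pi.add_apply, Finset.sum_apply, Pi.smul_apply,
      auxT_left, auxT_star, smul_eq_mul, Pi.zero_apply, ← hu] using this
  refine ⟨Pi.single 1 1 + u, ?_, ?_⟩
  · rw [← auxL_apply, map_add, hδ, hB']; abel
  · rw [Matrix.mem_unitaryGroup_iff']
    ext g h
    have hsum : ∑ k, star (u (k⁻¹ * g)) * u (k⁻¹ * h) =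
        ∑ y, star (u y) * u (y * (g⁻¹ * h)) := by
      rw [← Equiv.sum_comp ((Equiv.inv G).trans (Equiv.mulRight g))
        (fun y => star (u y) * u (y * (g⁻¹ * h)))]
      refine Finset.sum_congr rfl fun k _ => ?_
      simp [mul_assoc]
    have hx := hw' (g⁻¹ * h)
    rw [← hsum] at hx
    have hs : ∀ k x : G, (Pi.single 1 1 : G → ℂ) (k⁻¹ * x) = if k = x then 1 else 0 := by
      intro k x
      simp [Pi.single_apply, inv_mul_eq_one]
    simp only [Matrix.star_eq_conjTranspose, Matrix.mul_apply, Matrix.conjTranspose_apply,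
      groupCirculant, Matrix.of_apply, Pi.add_apply, star_add, add_mul, mul_add,
      Finset.sum_add_distrib, hs]
    have e1 : ∑ k, star (if k = g then (1:ℂ) else 0) * (if k = h then 1 else 0) =
        (1 : Matrix G G ℂ) g h := by
      rw [Finset.sum_eq_single g]
      · simp [Matrix.one_apply]
      · intro b _ hb; simp [hb]
      · simp
    have e2 : ∑ k, star (if k = g then (1:ℂ) else 0) * u (k⁻¹ * h) = u (g⁻¹ * h) := by
      rw [Finset.sum_eq_single g]
      · simp
      · intro b _ hb; simp [hb]
      · simp
    have e3 : ∑ k, star (u (k⁻¹ * g)) * (if k = h then (1:ℂ) else 0) =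
        star (u (g⁻¹ * h)⁻¹) := by
      simp
    rw [e1, e2, e3]
    linear_combination hx
end

section
/- Let G be a finite group with identity 1 and let D : G → U(n) be a projective unitary representation with factor set ω : G × G → ℂ, i.e., D(1) = I_n and D(g)·D(h) = ω(g,h)·D(gh) for all g,h ∈ G, with every D(g) unitary. Suppose the family {D(g) : g ∈ G} is linearly independent over ℂ, and suppose A is an n×n unitary matrix with A = Σ_{g ∈ G} α(g)·D(g) for coefficients α(g) ∈ ℂ. Then the projective group circulant circ_{G,ω}(α), the G×G matrix with entry ω(g⁻¹,h)⁻¹·α(g⁻¹h) at position (g,h), is a unitary matrix. -/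
/-- The projective group circulant for `(G, ω)` with respect to `α`: the `G × G`
matrix with entry `ω(g⁻¹,h)⁻¹ · α(g⁻¹h)` at position `(g, h)`. -/
noncomputable def projCirculant {G : Type*} [Group G] (ω : G → G → ℂ) (α : G → ℂ) : Matrix G G ℂ :=
  Matrix.of fun g h : G => (ω g⁻¹ h)⁻¹ * α (g⁻¹ * h)

open scoped Matrix

theorem stmt_9 {n : ℕ} {G : Type*} [Group G] [Fintype G] [DecidableEq G]
    (D : G → Matrix (Fin n) (Fin n) ℂ) (ω : G → G → ℂ)
    (hunit : ∀ g : G, D g ∈ Matrix.unitaryGroup (Fin n) ℂ)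
    (hone : D 1 = 1)
    (hmul : ∀ g h : G, D g * D h = ω g h • D (g * h))
    (hli : LinearIndependent ℂ D)
    (A : Matrix (Fin n) (Fin n) ℂ) (hA : A ∈ Matrix.unitaryGroup (Fin n) ℂ)
    (α : G → ℂ) (hlin : A = ∑ g : G, α g • D g) :
    projCirculant ω α ∈ Matrix.unitaryGroup G ℂ := by
  have hu1 : ∀ g, (D g)ᴴ * D g = 1 := fun g => Matrix.mem_unitaryGroup_iff'.mp (hunit g)
  have hu2 : ∀ g, D g * (D g)ᴴ = 1 := fun g => Matrix.mem_unitaryGroup_iff.mp (hunit g)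
  have hA2 : A * Aᴴ = 1 := Matrix.mem_unitaryGroup_iff.mp hA
  have hω : ∀ g h, ω g h ≠ 0 := by
    intro g h h0
    have h1 := hmul g h
    rw [h0, zero_smul] at h1
    apply hli.ne_zero h
    calc D h = ((D g)ᴴ * D g) * D h := by rw [hu1, one_mul]
      _ = 0 := by rw [mul_assoc, h1, mul_zero]
  have hinv : ∀ g, (D g)ᴴ = (ω g⁻¹ g)⁻¹ • D g⁻¹ := by
    intro g
    have h1 := hmul g⁻¹ g
    rw [inv_mul_cancel, hone] at h1
    have h2 : D g⁻¹ = ω g⁻¹ g • (D g)ᴴ := by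
      calc D g⁻¹ = D g⁻¹ * (D g * (D g)ᴴ) := by rw [hu2, mul_one]
        _ = _ := by rw [← mul_assoc, h1, smul_mul_assoc, one_mul]
    rw [h2, smul_smul, inv_mul_cancel₀ (hω _ _), one_smul]
  -- the functional reading off the coefficient of `D 1`
  obtain ⟨τ, hτ⟩ : ∃ τ : Matrix (Fin n) (Fin n) ℂ →ₗ[ℂ] ℂ, ∀ g, τ (D g) = if g = 1 then 1 else 0 := by
    obtain ⟨τ, h⟩ := LinearMap.exists_extend
      ((Finsupp.lapply (1 : G) : (G →₀ ℂ) →ₗ[ℂ] ℂ) ∘ₗ (hli.repr : _ →ₗ[ℂ] (G →₀ ℂ)))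
    refine ⟨τ, fun g => ?_⟩
    have h1 := LinearMap.congr_fun h ⟨D g, Submodule.subset_span ⟨g, rfl⟩⟩
    have h2 := hli.repr_eq_single g ⟨D g, Submodule.subset_span ⟨g, rfl⟩⟩ rfl
    simp only [LinearMap.comp_apply, Submodule.subtype_apply, LinearEquiv.coe_coe] at h1
    erw [h1, h2]
    simp [Finsupp.single_apply]
  have hττ : ∀ g h, τ (D g * (D h)ᴴ) = if g = h then 1 else 0 := by
    intro g h
    split_ifs with e
    · rw [e, hu2, ← hone, hτ, if_pos rfl]
    · rw [hinv, mul_smul_comm, hmul, map_smul, map_smul, hτ, if_neg, smul_zero, smul_zero]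
      rwa [mul_inv_eq_one]
  have hτE : ∀ g h, τ ((D g⁻¹)ᴴ * D h⁻¹) = if g = h then 1 else 0 := by
    intro g h
    split_ifs with e
    · rw [e, hu1, ← hone, hτ, if_pos rfl]
    · rw [hinv, smul_mul_assoc, hmul, map_smul, map_smul, hτ, if_neg, smul_zero, smul_zero]
      rwa [inv_inv, mul_inv_eq_one]
  have key : ∀ g, (D g⁻¹)ᴴ * A = ∑ k, projCirculant ω α g k • D k := by
    intro g
    rw [hlin, Finset.mul_sum, ← Equiv.sum_comp (Equiv.mulLeft g⁻¹)]
    refine Finset.sum_congr rfl fun k _ => ?_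
    have h1 : D (g⁻¹ * k) = (ω g⁻¹ k)⁻¹ • (D g⁻¹ * D k) := by
      rw [hmul, smul_smul, inv_mul_cancel₀ (hω _ _), one_smul]
    simp only [Equiv.coe_mulLeft, projCirculant, Matrix.of_apply]
    rw [h1, mul_smul_comm, mul_smul_comm, ← mul_assoc, hu1, one_mul, smul_smul, mul_comm]
  rw [Matrix.mem_unitaryGroup_iff]
  ext g h
  rw [Matrix.mul_apply, Matrix.one_apply, ← hτE g h]
  have h1 : (D g⁻¹)ᴴ * D h⁻¹ = ((D g⁻¹)ᴴ * A) * ((D h⁻¹)ᴴ * A)ᴴ := by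
    rw [Matrix.conjTranspose_mul, Matrix.conjTranspose_conjTranspose, mul_assoc, ← mul_assoc A,
      hA2, one_mul]
  rw [h1, key, key, Matrix.conjTranspose_sum, Finset.sum_mul, map_sum]
  refine Finset.sum_congr rfl fun k _ => ?_
  rw [Finset.mul_sum, map_sum]
  simp [Matrix.conjTranspose_smul, hττ, Matrix.star_apply, mul_comm]
end

section
/- Let G be a finite group with identity 1 and let D : G → U(n) be a projective unitary representation with factor set ω : G × G → ℂ (D(1) = I_n, D(g)·D(h) = ω(g,h)·D(gh), every D(g) unitary) such that the family {D(g) : g ∈ G} is linearly independent over ℂ. Suppose A is an n×n unitary matrix with A = Σ_{g ∈ G} α(g)·D(g) for coefficients α(g) ∈ ℂ. Then for all g,k ∈ G: Σ_{h ∈ G} (ω(g,h)·conj(ω(k,h)))⁻¹·α(gh)·conj(α(kh)) = 1 if g = k, and = 0 otherwise. -/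
theorem stmt_10 {n : ℕ} {G : Type*} [Group G] [Fintype G] [DecidableEq G]
    (D : G → Matrix (Fin n) (Fin n) ℂ) (ω : G → G → ℂ)
    (hunit : ∀ g : G, D g ∈ Matrix.unitaryGroup (Fin n) ℂ)
    (hone : D 1 = 1)
    (hmul : ∀ g h : G, D g * D h = ω g h • D (g * h))
    (hli : LinearIndependent ℂ D)
    (A : Matrix (Fin n) (Fin n) ℂ) (hA : A ∈ Matrix.unitaryGroup (Fin n) ℂ)
    (α : G → ℂ) (hlin : A = ∑ g : G, α g • D g) :
    ∀ g k : G,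
      (∑ h : G, (ω g h * (starRingEnd ℂ) (ω k h))⁻¹ *
        (α (g * h) * (starRingEnd ℂ) (α (k * h)))) =
      if g = k then 1 else 0 := by
  intro g k
  have hs1 : ∀ g, D g * star (D g) = 1 := fun g => (Matrix.mem_unitaryGroup_iff).1 (hunit g)
  have hs2 : ∀ g, star (D g) * D g = 1 := fun g => (Matrix.mem_unitaryGroup_iff').1 (hunit g)
  have hω : ∀ g h, ω g h ≠ 0 := by
    intro g h h0
    have h1 := hmul g h
    rw [h0, zero_smul] at h1
    have h2 : D h = 0 := by
      calc D h = star (D g) * (D g * D h) := by rw [← mul_assoc, hs2, one_mul]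
        _ = 0 := by rw [h1, mul_zero]
    exact hli.ne_zero h h2
  obtain ⟨φ, hφ⟩ : ∃ φ : Matrix (Fin n) (Fin n) ℂ →ₗ[ℂ] ℂ,
      ∀ g, φ (D g) = if g = 1 then 1 else 0 := by
    obtain ⟨φ, hφ⟩ := LinearMap.exists_extend ((Module.Basis.span hli).coord 1)
    refine ⟨φ, fun g => ?_⟩
    have h1 := LinearMap.congr_fun hφ (Module.Basis.span hli g)
    rw [Module.Basis.coord_apply, Module.Basis.repr_self, Finsupp.single_apply,
      LinearMap.comp_apply, Submodule.subtype_apply, Module.Basis.span_apply] at h1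
    exact h1
  have hr : ∀ h k, φ (D h * star (D k)) = if h = k then 1 else 0 := by
    intro h k
    split_ifs with e
    · subst e
      rw [hs1, ← hone, hφ, if_pos rfl]
    · have h1 := hmul (h * k⁻¹) k
      rw [inv_mul_cancel_right] at h1
      have h2 : D (h * k⁻¹) = ω (h * k⁻¹) k • (D h * star (D k)) := by
        rw [← smul_mul_assoc, ← h1, mul_assoc, hs1, mul_one]
      have h3 := hφ (h * k⁻¹)
      rw [if_neg (by rwa [mul_inv_eq_one]), h2, map_smul, smul_eq_mul] at h3
      exact (mul_eq_zero.1 h3).resolve_left (hω _ _)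
  have hl : φ (star (D g) * D k) = if g = k then 1 else 0 := by
    split_ifs with e
    · subst e
      rw [hs2, ← hone, hφ, if_pos rfl]
    · have h1 := hmul g (g⁻¹ * k)
      rw [mul_inv_cancel_left] at h1
      have h2 : D (g⁻¹ * k) = ω g (g⁻¹ * k) • (star (D g) * D k) := by
        rw [← mul_smul_comm, ← h1, ← mul_assoc, hs2, one_mul]
      have h3 := hφ (g⁻¹ * k)
      rw [if_neg (by rwa [inv_mul_eq_one]), h2, map_smul, smul_eq_mul] at h3
      exact (mul_eq_zero.1 h3).resolve_left (hω _ _)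
  have hB : ∀ g, star (D g) * A = ∑ h, ((ω g h)⁻¹ * α (g * h)) • D h := by
    intro g
    have : A = D g * ∑ h, ((ω g h)⁻¹ * α (g * h)) • D h := by
      rw [hlin, Finset.mul_sum, ← Equiv.sum_comp (Equiv.mulLeft g)]
      refine Finset.sum_congr rfl fun h _ => ?_
      rw [mul_smul_comm, hmul, smul_smul, Equiv.coe_mulLeft]
      congr 1
      field_simp [hω g h]
    conv_lhs => rw [this]
    rw [← mul_assoc, hs2, one_mul]
  have key : (star (D g) * A) * star (star (D k) * A) = star (D g) * D k := by
    rw [star_mul, star_star, mul_assoc, ← mul_assoc A, (Matrix.mem_unitaryGroup_iff).1 hA, one_mul]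
  rw [← hl, ← key, hB, hB, star_sum, Finset.sum_mul_sum, map_sum]
  refine Finset.sum_congr rfl fun h _ => ?_
  rw [map_sum]
  simp only [star_smul, smul_mul_smul_comm, map_smul, hr, smul_eq_mul, mul_ite, mul_one, mul_zero,
    Finset.sum_ite_eq, Finset.mem_univ, if_true]
  simp only [star_mul', star_inv₀, mul_inv, starRingEnd_apply]
  ring
end

section
/- Let N be a positive integer, F_N the normalized discrete Fourier transform of size N, and for α ∈ ℝ define the fractional Fourier transform F_{N,α} := a₀(α)·I_N + a₁(α)·F_N + a₂(α)·F_N² + a₃(α)·F_N³, where a₀(α) = (1/2)(1 + e^{iα})·cos α, a₁(α) = (1/2)(1 − i·e^{iα})·sin α, a₂(α) = (1/2)(−1 + e^{iα})·cos α, a₃(α) = (1/2)(−1 − i·e^{iα})·sin α. Then F_{N,α} is a unitary matrix for every α ∈ ℝ. -/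
noncomputable def a0 (α : ℝ) : ℂ :=
  (1 / 2) * (1 + Complex.exp (α * Complex.I)) * Real.cos α

noncomputable def a1 (α : ℝ) : ℂ :=
  (1 / 2) * (1 - Complex.I * Complex.exp (α * Complex.I)) * Real.sin α

noncomputable def a2 (α : ℝ) : ℂ :=
  (1 / 2) * (-1 + Complex.exp (α * Complex.I)) * Real.cos α

noncomputable def a3 (α : ℝ) : ℂ :=
  (1 / 2) * (-1 - Complex.I * Complex.exp (α * Complex.I)) * Real.sin α

/-- The fractional Fourier transform
`F_{N,α} = a₀(α)·I_N + a₁(α)·F_N + a₂(α)·F_N² + a₃(α)·F_N³`. -/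
noncomputable def fracDFT (N : ℕ) (α : ℝ) : Matrix (Fin N) (Fin N) ℂ :=
  a0 α • (1 : Matrix (Fin N) (Fin N) ℂ) + a1 α • dft N + a2 α • dft N ^ 2 +
    a3 α • dft N ^ 3

theorem geom_aux (N : ℕ) (hN : 0 < N) (m : ℤ) :
    ∑ j : Fin N, Complex.exp (2 * Real.pi * Complex.I * ((j.1 : ℂ) * (m : ℂ)) / N)
      = if (N : ℤ) ∣ m then (N : ℂ) else 0 := by
  have hN0 : (N : ℂ) ≠ 0 := by exact_mod_cast hN.ne'
  set z : ℂ := Complex.exp (2 * Real.pi * Complex.I * (m : ℂ) / N) with hz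
  have h1 : ∀ j : ℕ, Complex.exp (2 * Real.pi * Complex.I * ((j : ℂ) * (m : ℂ)) / N) = z ^ j := by
    intro j
    rw [hz, ← Complex.exp_nat_mul]
    congr 1
    ring
  simp only [h1]
  rw [Fin.sum_univ_eq_sum_range (fun j => z ^ j) N]
  have hzN : z ^ N = 1 := by
    rw [hz, ← Complex.exp_nat_mul, Complex.exp_eq_one_iff]
    exact ⟨m, by field_simp⟩
  have hz1 : z = 1 ↔ (N : ℤ) ∣ m := by
    rw [hz, Complex.exp_eq_one_iff]
    constructor
    · rintro ⟨n, hn⟩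
      refine ⟨n, ?_⟩
      have hpi := Complex.two_pi_I_ne_zero
      have : (2 * Real.pi * Complex.I) * ((m : ℂ)) = (2 * Real.pi * Complex.I) * (N * n) := by
        field_simp at hn
        linear_combination (2 * Real.pi * Complex.I) * hn
      have := mul_left_cancel₀ hpi this
      exact_mod_cast this
    · rintro ⟨n, rfl⟩
      refine ⟨n, ?_⟩
      push_cast
      field_simp
  split_ifs with h
  · rw [hz1.2 h]; simp
  · have hne : z ≠ 1 := fun h' => h (hz1.1 h')
    rw [geom_sum_eq hne, hzN]; simp

theorem sqrt_aux (N : ℕ) (hN : 0 < N) :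
    ((1 / Real.sqrt N : ℝ) : ℂ) * ((1 / Real.sqrt N : ℝ) : ℂ) * N = 1 := by
  have : (1 / Real.sqrt N) * (1 / Real.sqrt N) * (N : ℝ) = 1 := by
    have hp : (0 : ℝ) < N := by exact_mod_cast hN
    have hs : Real.sqrt N ≠ 0 := (Real.sqrt_pos.2 hp).ne'
    have := Real.mul_self_sqrt hp.le
    field_simp
    nlinarith
  exact_mod_cast this

theorem dft_sq_apply (N : ℕ) (hN : 0 < N) (k l : Fin N) :
    (dft N * dft N) k l = if (N : ℤ) ∣ ((k.1 : ℤ) + l.1) then 1 else 0 := by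
  have h := geom_aux N hN ((k.1 : ℤ) + l.1)
  have hs := sqrt_aux N hN
  rw [Matrix.mul_apply]
  have : ∀ j : Fin N, dft N k j * dft N j l =
      ((1 / Real.sqrt N : ℝ) : ℂ) * ((1 / Real.sqrt N : ℝ) : ℂ) *
      Complex.exp (2 * Real.pi * Complex.I * ((j.1 : ℂ) * (((k.1 : ℤ) + l.1 : ℤ) : ℂ)) / N) := by
    intro j
    simp only [dft, Matrix.of_apply]
    rw [mul_mul_mul_comm, ← Complex.exp_add]
    congr 2
    push_cast
    ring
  rw [Finset.sum_congr rfl (fun j _ => this j), ← Finset.mul_sum, h]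
  split_ifs
  · exact hs
  · simp

theorem star_dft_apply (N : ℕ) (k l : Fin N) :
    (star (dft N)) k l = ((1 / Real.sqrt N : ℝ) : ℂ) *
      Complex.exp (-(2 * Real.pi * Complex.I * ((k.1 * l.1 : ℕ) : ℂ) / N)) := by
  simp only [Matrix.star_apply, dft, Matrix.of_apply, RCLike.star_def, map_mul,
    Complex.conj_ofReal, ← Complex.exp_conj, map_div₀, Complex.conj_I, map_natCast, map_ofNat]
  congr 2
  push_cast
  ring

theorem dft_mul_star (N : ℕ) (hN : 0 < N) : dft N * star (dft N) = 1 := by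
  ext k l
  have h := geom_aux N hN ((k.1 : ℤ) - l.1)
  have hs := sqrt_aux N hN
  rw [Matrix.mul_apply]
  have : ∀ j : Fin N, dft N k j * (star (dft N)) j l =
      ((1 / Real.sqrt N : ℝ) : ℂ) * ((1 / Real.sqrt N : ℝ) : ℂ) *
      Complex.exp (2 * Real.pi * Complex.I * ((j.1 : ℂ) * (((k.1 : ℤ) - l.1 : ℤ) : ℂ)) / N) := by
    intro j
    rw [star_dft_apply]
    simp only [dft, Matrix.of_apply]
    rw [mul_mul_mul_comm, ← Complex.exp_add]
    congr 2
    push_cast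
    ring
  rw [Finset.sum_congr rfl (fun j _ => this j), ← Finset.mul_sum, h, Matrix.one_apply]
  have hiff : (N : ℤ) ∣ ((k.1 : ℤ) - l.1) ↔ k = l := by
    constructor
    · intro hd
      have := Int.eq_zero_of_abs_lt_dvd hd (by
        rw [abs_lt]; have := k.2; have := l.2; constructor <;> omega)
      ext; omega
    · rintro rfl; simp
  simp only [hiff]
  split_ifs
  · exact hs
  · simp

theorem star_dft_sq (N : ℕ) (hN : 0 < N) :
    star (dft N) * star (dft N) = dft N * dft N := by
  rw [← star_mul]
  ext k l
  rw [Matrix.star_apply, dft_sq_apply N hN, dft_sq_apply N hN, add_comm]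
  split_ifs <;> simp

theorem stmt_15 (N : ℕ) (hN : 0 < N) (α : ℝ) :
    fracDFT N α ∈ Matrix.unitaryGroup (Fin N) ℂ := by
  rw [Matrix.mem_unitaryGroup_iff]
  have hFG := dft_mul_star N hN
  have hGF : star (dft N) * dft N = 1 := mul_eq_one_comm.1 hFG
  have hGG := star_dft_sq N hN
  have hstar : ∀ a : ℂ, star a = (starRingEnd ℂ) a := fun _ => rfl
  unfold fracDFT
  generalize hG : star (dft N) = G at *
  have hGs : star G = dft N := by rw [← hG, star_star]
  generalize dft N = F at *
  have hF3 : F ^ 3 = G := by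
    rw [pow_succ, pow_two, ← hGG, mul_assoc, hGF, mul_one]
  have hSS : (F * F) * (F * F) = 1 := by
    rw [← hGG, hGG, ← mul_assoc, ← hGG] ; 
    rw [mul_assoc, mul_assoc, ← mul_assoc G F F, hGF, one_mul, hGF]
  have hSF : F * F * F = G := by rw [← hF3, pow_succ, pow_two]
  have hFS : F * (F * F) = G := by rw [← mul_assoc, hSF]
  have hSG : F * F * G = F := by rw [mul_assoc, hFG, mul_one]
  have hGS : G * (F * F) = F := by rw [← mul_assoc, hGF, one_mul]
  rw [hF3, pow_two]
  simp only [star_add, star_smul, star_mul, star_one, hG, hGs, hGG]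
  generalize hS : F * F = S at *
  have key : ∀ a b c d a' b' c' d' : ℂ,
      (a • (1 : Matrix (Fin N) (Fin N) ℂ) + b • F + c • S + d • G) *
        (a' • (1 : Matrix (Fin N) (Fin N) ℂ) + b' • G + c' • S + d' • F) =
      (a * a' + b * b' + c * c' + d * d') • (1 : Matrix (Fin N) (Fin N) ℂ) +
      (a * d' + b * a' + c * b' + d * c') • F +
      (a * c' + b * d' + c * a' + d * b') • S +
      (a * b' + b * c' + c * d' + d * a') • G := by
    intros
    simp only [add_mul, mul_add, smul_mul_smul_comm, one_mul, mul_one, hS, hFS, hSF, hFG, hGF,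
      hGG, hSG, hGS, hSS]
    module
  rw [key]
  have hI : Complex.I ^ 2 = -1 := Complex.I_sq
  have hcs : (Real.cos α : ℂ) ^ 2 + (Real.sin α : ℂ) ^ 2 = 1 := by
    exact_mod_cast Real.cos_sq_add_sin_sq α
  have hE : Complex.exp (α * Complex.I) = Real.cos α + Real.sin α * Complex.I := by
    rw [Complex.exp_mul_I]; simp
  simp only [a0, a1, a2, a3, hE, hstar, map_mul, map_add, map_sub, map_neg, map_one, map_div₀,
    map_ofNat, Complex.conj_I, Complex.conj_ofReal]
  generalize (Real.cos α : ℂ) = c at *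
  generalize (Real.sin α : ℂ) = s at *
  generalize Complex.I = i at *
  have e : ∀ x y z w : ℂ, x = 1 → y = 0 → z = 0 → w = 0 →
      x • (1 : Matrix (Fin N) (Fin N) ℂ) + y • F + z • S + w • G = 1 := by
    rintro _ _ _ _ rfl rfl rfl rfl; simp
  apply e <;> grind
end
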